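/- Fix t > 0 and integers m̂, m ≥ 1. For (x̂, â) ∈ ℝ^{2m̂} and (x, a) ∈ ℝ^{2m} define R((x̂,â),(x,a)) := inf { Σ_{k=1}^{m̂} I(f_k ∥ p_{x̂_k,â_k}(t)) : f₁,…,f_{m̂} are 1-Lipschitz functions ℝ → ℝ with p_{x̂_k,â_k}(t) ≤ f_k ≤ p_{x̂_k,â_k}(0) pointwise for each k, and max_{1≤k≤m̂} f_k(x_j) = a_j for each j = 1,…,m } ∈ [0, +∞], with inf ∅ := +∞. Then R is lower semicontinuous as a function ℝ^{2m̂} × ℝ^{2m} → [0, +∞]. -/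

import Mathlib

open MeasureTheory

/-- The (shifted) parabola `p(t,x)`: for `t > 0`, `p(t,x) = -t/2 - x²/(2t)` when `|x| ≤ t`
and `p(t,x) = -|x|` otherwise; also `p(0,x) = -|x|`. -/
noncomputable def parab (t x : ℝ) : ℝ :=
  if 0 < t ∧ |x| ≤ t then -t / 2 - x ^ 2 / (2 * t) else -|x|

/-- The shifted parabola `p_{x̂,â}(t,x) = p(t, x - x̂) + â`. -/
noncomputable def parabXA (xh ah t x : ℝ) : ℝ :=
  parab t (x - xh) + ah

/-- The Bernoulli entropy `H(u) = ((1+u)/2)·log(1+u) + ((1-u)/2)·log(1-u)`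
(with `0 · log 0 = 0`, as `Real.log 0 = 0`). -/
noncomputable def Hber (u : ℝ) : ℝ :=
  (1 + u) / 2 * Real.log (1 + u) + (1 - u) / 2 * Real.log (1 - u)

/-- The excess entropy `I(f ∥ p_{x̂,â}(t)) = ∫ ( H(f') - H(∂ₓ p_{x̂,â}(t,·)) )`. -/
noncomputable def excessEntropy (xh ah t : ℝ) (f : ℝ → ℝ) : ℝ :=
  ∫ y : ℝ, (Hber (deriv f y) - Hber (deriv (parabXA xh ah t) y))

/-- The finite-dimensional random-walk rate function `Irw((x̂,â) → (x,a))`, with values in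
`[0,∞]` and `inf ∅ = +∞`. -/
noncomputable def raterw (t : ℝ) (mh m : ℕ) (xa : Fin mh → ℝ × ℝ) (pts : Fin m → ℝ × ℝ) :
    ENNReal :=
  ⨅ (f : Fin mh → ℝ → ℝ)
    (_ : (∀ k, LipschitzWith 1 (f k) ∧
          ∀ y, parabXA (xa k).1 (xa k).2 t y ≤ f k y ∧ f k y ≤ parabXA (xa k).1 (xa k).2 0 y) ∧
        ∀ j, (⨆ k, f k (pts j).1) = (pts j).2),
    ENNReal.ofReal (∑ k, excessEntropy (xa k).1 (xa k).2 t (f k))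

open Filter Topology

lemma Hber_eq (u : ℝ) : Hber u = (1/2) * ((1+u) * Real.log (1+u)) + (1/2) * ((1-u) * Real.log (1-u)) := by
  unfold Hber; ring

lemma Hber_continuous : Continuous Hber := by
  have h : Hber = fun u => (1/2) * ((1+u) * Real.log (1+u)) + (1/2) * ((1-u) * Real.log (1-u)) :=
    funext Hber_eq
  rw [h]
  have h1 : Continuous fun u : ℝ => (1+u) * Real.log (1+u) :=
    Real.continuous_mul_log.comp (continuous_const.add continuous_id)
  have h2 : Continuous fun u : ℝ => (1-u) * Real.log (1-u) :=
    Real.continuous_mul_log.comp (continuous_const.sub continuous_id)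
  exact (continuous_const.mul h1).add (continuous_const.mul h2)

lemma Hber_convexOn : ConvexOn ℝ (Set.Icc (-1) 1) Hber := by
  refine ⟨convex_Icc _ _, ?_⟩
  intro x hx y hy a b ha hb hab
  have h := Real.convexOn_mul_log.2
  have h1 := h (x := 1 + x) (by simp; linarith [hx.1]) (y := 1 + y) (by simp; linarith [hy.1]) ha hb hab
  have h2 := h (x := 1 - x) (by simp; linarith [hx.2]) (y := 1 - y) (by simp; linarith [hy.2]) ha hb hab
  simp only [smul_eq_mul] at h1 h2 ⊢
  have e1 : a * (1 + x) + b * (1 + y) = 1 + (a * x + b * y) := by linear_combination hab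
  have e2 : a * (1 - x) + b * (1 - y) = 1 - (a * x + b * y) := by linear_combination hab
  rw [e1] at h1
  rw [e2] at h2
  rw [Hber_eq, Hber_eq, Hber_eq]
  nlinarith

lemma Hber_bound : ∃ M, ∀ u ∈ Set.Icc (-1:ℝ) 1, ‖Hber u‖ ≤ M :=
  isCompact_Icc.exists_bound_of_continuousOn Hber_continuous.continuousOn

lemma deriv_mem {f : ℝ → ℝ} (hf : LipschitzWith 1 f) (y : ℝ) : deriv f y ∈ Set.Icc (-1:ℝ) 1 := by
  have := norm_deriv_le_of_lipschitz (x₀ := y) hf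
  simp only [Real.norm_eq_abs, NNReal.coe_one] at this
  exact abs_le.1 this

lemma intble_of_bdd {g : ℝ → ℝ} (hm : Measurable g) (hb : ∀ y, g y ∈ Set.Icc (-1:ℝ) 1) (a b : ℝ) :
    IntervalIntegrable (fun y => Hber (g y)) volume a b := by
  obtain ⟨M, hM⟩ := Hber_bound
  refine (intervalIntegrable_const (c := M)).mono_fun ?_ ?_
  · exact (Hber_continuous.measurable.comp hm).aestronglyMeasurable
  · refine Eventually.of_forall fun y => ?_
    exact (hM _ (hb y)).trans (Real.le_norm_self _)

lemma jensen {f : ℝ → ℝ} (hf : LipschitzWith 1 f) {a h : ℝ} (hh : 0 < h) :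
    h * Hber ((f (a + h) - f a) / h) ≤ ∫ y in a..(a+h), Hber (deriv f y) := by
  have hle : a ≤ a + h := by linarith
  have hac : AbsolutelyContinuousOnInterval f a (a+h) :=
    (hf.lipschitzOnWith (s := Set.uIcc a (a+h))).absolutelyContinuousOnInterval
  have hint := hac.integral_deriv_eq_sub
  have hvol : volume (Set.Ioc a (a+h)) ≠ 0 := by simp [hh]
  have hvol' : volume (Set.Ioc a (a+h)) ≠ ⊤ := by simp
  have hI : IntervalIntegrable (deriv f) volume a (a+h) := by
    refine (intervalIntegrable_const (c := (1:ℝ))).mono_fun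
      (measurable_deriv f).aestronglyMeasurable (Eventually.of_forall fun y => ?_)
    simpa using norm_deriv_le_of_lipschitz (x₀ := y) hf
  have hI2 := intble_of_bdd (measurable_deriv f) (deriv_mem hf) a (a+h)
  rw [intervalIntegrable_iff_integrableOn_Ioc_of_le hle] at hI hI2
  have key := Hber_convexOn.map_set_average_le (μ := volume) (t := Set.Ioc a (a+h)) (f := deriv f)
    Hber_continuous.continuousOn isClosed_Icc hvol hvol'
    (Eventually.of_forall (deriv_mem hf)) hI hI2
  rw [setAverage_eq, setAverage_eq] at key
  rw [intervalIntegral.integral_of_le hle] at hint ⊢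
  have hr : volume.real (Set.Ioc a (a+h)) = h := by
    simp [hh.le]
  rw [hr, hint] at key
  simp only [smul_eq_mul] at key
  have e : (f (a+h) - f a) / h = h⁻¹ * (f (a+h) - f a) := by ring
  rw [e]
  calc h * Hber (h⁻¹ * (f (a+h) - f a)) ≤ h * (h⁻¹ * _) := mul_le_mul_of_nonneg_left key hh.le
    _ = _ := by field_simp

/-- Riemann-type sum of entropies of slopes. -/
noncomputable def slopeSum (f : ℝ → ℝ) (a h : ℝ) (n : ℕ) : ℝ :=
  ∑ i ∈ Finset.range n, h * Hber ((f (a + i * h + h) - f (a + i * h)) / h)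

lemma slopeSum_le {f : ℝ → ℝ} (hf : LipschitzWith 1 f) (a : ℝ) {h : ℝ} (hh : 0 < h) (n : ℕ) :
    slopeSum f a h n ≤ ∫ y in a..(a + n * h), Hber (deriv f y) := by
  have := intervalIntegral.sum_integral_adjacent_intervals (f := fun y => Hber (deriv f y))
    (μ := volume) (a := fun i : ℕ => a + i * h) (n := n)
    (fun k _ => intble_of_bdd (measurable_deriv f) (deriv_mem hf) _ _)
  simp only [Nat.cast_zero, zero_mul, add_zero] at this
  rw [← this]
  refine Finset.sum_le_sum fun i _ => ?_
  have h1 := jensen hf (a := a + i * h) hh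
  have e : a + ((i + 1 : ℕ) : ℝ) * h = a + i * h + h := by push_cast; ring
  rw [e]; exact h1

/-- Step function of slopes. -/
noncomputable def stepSlope (f : ℝ → ℝ) (a h y : ℝ) : ℝ :=
  (f (a + (⌈(y - a) / h⌉ : ℤ) * h) - f (a + (⌈(y - a) / h⌉ : ℤ) * h - h)) / h

lemma stepSlope_mem {f : ℝ → ℝ} (hf : LipschitzWith 1 f) (a : ℝ) {h : ℝ} (hh : 0 < h) (y : ℝ) :
    stepSlope f a h y ∈ Set.Icc (-1:ℝ) 1 := by
  have := hf.dist_le_mul (a + (⌈(y - a) / h⌉ : ℤ) * h) (a + (⌈(y - a) / h⌉ : ℤ) * h - h)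
  rw [Real.dist_eq, Real.dist_eq] at this
  simp only [NNReal.coe_one, one_mul, sub_sub_cancel] at this
  rw [Set.mem_Icc, ← abs_le]
  unfold stepSlope
  rw [abs_div, div_le_one (by positivity)]
  exact this

lemma stepSlope_measurable {f : ℝ → ℝ} (hf : LipschitzWith 1 f) (a h : ℝ) :
    Measurable (stepSlope f a h) := by
  have hm := hf.continuous.measurable
  have hc : Measurable fun y : ℝ => ((⌈(y - a) / h⌉ : ℤ) : ℝ) :=
    (measurable_from_top (f := fun z : ℤ => (z : ℝ))).comp
      (Int.measurable_ceil.comp ((measurable_id.sub_const a).div_const h))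
  unfold stepSlope
  exact ((hm.comp ((hc.mul_const h).const_add a)).sub
    (hm.comp (((hc.mul_const h).const_add a).sub_const h))).div_const h

lemma slopeSum_eq {f : ℝ → ℝ} (hf : LipschitzWith 1 f) (a : ℝ) {h : ℝ} (hh : 0 < h) (n : ℕ) :
    slopeSum f a h n = ∫ y in a..(a + n * h), Hber (stepSlope f a h y) := by
  have := intervalIntegral.sum_integral_adjacent_intervals (f := fun y => Hber (stepSlope f a h y))
    (μ := volume) (a := fun i : ℕ => a + i * h) (n := n)
    (fun k _ => intble_of_bdd (stepSlope_measurable hf a h) (stepSlope_mem hf a hh) _ _)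
  simp only [Nat.cast_zero, zero_mul, add_zero] at this
  rw [← this]
  refine Finset.sum_congr rfl fun i _ => ?_
  have e : a + ((i + 1 : ℕ) : ℝ) * h = a + i * h + h := by push_cast; ring
  rw [e]
  have : ∫ y in (a + i * h)..(a + i * h + h), Hber (stepSlope f a h y)
      = ∫ y in (a + i * h)..(a + i * h + h), Hber ((f (a + i * h + h) - f (a + i * h)) / h) := by
    refine intervalIntegral.integral_congr_ae (Eventually.of_forall fun y hy => ?_)
    rw [Set.uIoc_of_le (by linarith)] at hy
    have hc : ⌈(y - a) / h⌉ = (i : ℤ) + 1 := by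
      rw [Int.ceil_eq_iff]
      push_cast
      constructor
      · rw [lt_div_iff₀ hh]; nlinarith [hy.1]
      · rw [div_le_iff₀ hh]; nlinarith [hy.2]
    unfold stepSlope
    rw [hc]
    push_cast
    congr 4 <;> ring
  rw [this, intervalIntegral.integral_const]
  simp

lemma straddle {f : ℝ → ℝ} {f' y : ℝ} (hd : HasDerivAt f f' y) {u h : ℕ → ℝ}
    (hh : ∀ n, 0 < h n) (h0 : Tendsto h atTop (𝓝 0)) (h1 : ∀ n, y ≤ u n) (h2 : ∀ n, u n - h n ≤ y) :
    Tendsto (fun n => (f (u n) - f (u n - h n)) / h n) atTop (𝓝 f') := by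
  rw [hasDerivAt_iff_isLittleO, Asymptotics.isLittleO_iff] at hd
  rw [Metric.tendsto_atTop]
  intro ε hε
  have hd' := hd (half_pos hε)
  rw [Metric.eventually_nhds_iff] at hd'
  obtain ⟨δ, hδ, hd'⟩ := hd'
  obtain ⟨N, hN⟩ := (Metric.tendsto_atTop.1 h0) δ hδ
  refine ⟨N, fun n hn => ?_⟩
  have hn' := hN n hn
  have hp := hh n
  rw [Real.dist_eq, sub_zero, abs_of_pos hp] at hn'
  have A := hd' (y := u n) (by rw [Real.dist_eq, abs_of_nonneg (by linarith [h1 n])]; linarith [h2 n])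
  have B := hd' (y := u n - h n) (by
    rw [Real.dist_eq, abs_of_nonpos (by linarith [h2 n])]; linarith [h1 n])
  simp only [smul_eq_mul, Real.norm_eq_abs] at A B
  rw [abs_of_nonneg (a := u n - y) (by linarith [h1 n])] at A
  rw [abs_of_nonpos (a := u n - h n - y) (by linarith [h2 n])] at B
  rw [abs_le] at A B
  have key : |f (u n) - f (u n - h n) - f' * h n| ≤ ε / 2 * h n := by
    rw [abs_le]; constructor <;> nlinarith [A.1, A.2, B.1, B.2]
  have e : (f (u n) - f (u n - h n)) / h n - f' = (f (u n) - f (u n - h n) - f' * h n) / h n := by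
    field_simp
  rw [Real.dist_eq, e, abs_div, abs_of_pos hp, div_lt_iff₀ hp]
  nlinarith

lemma slopeSum_tendsto {f : ℝ → ℝ} (hf : LipschitzWith 1 f) (a : ℝ) {L : ℝ} (hL : 0 < L) :
    Tendsto (fun n : ℕ => slopeSum f a (L / (n + 1 : ℕ)) (n + 1)) atTop
      (𝓝 (∫ y in a..(a + L), Hber (deriv f y))) := by
  have hpos : ∀ n : ℕ, 0 < L / ((n + 1 : ℕ) : ℝ) := fun n => by positivity
  have h0 : Tendsto (fun n : ℕ => L / ((n + 1 : ℕ) : ℝ)) atTop (𝓝 0) :=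
    (tendsto_const_div_atTop_nhds_zero_nat L).comp (tendsto_add_atTop_nat 1)
  have hfun : (fun n : ℕ => slopeSum f a (L / (n + 1 : ℕ)) (n + 1)) =
      fun n : ℕ => ∫ y in a..(a + L), Hber (stepSlope f a (L / (n + 1 : ℕ)) y) := by
    funext n
    rw [slopeSum_eq hf a (hpos n)]
    congr 1
    have : ((n + 1 : ℕ) : ℝ) ≠ 0 := by positivity
    field_simp
  rw [hfun]
  obtain ⟨M, hM⟩ := Hber_bound
  refine intervalIntegral.tendsto_integral_filter_of_dominated_convergence (fun _ => M) ?_ ?_ ?_ ?_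
  · exact Eventually.of_forall fun n =>
      (Hber_continuous.measurable.comp (stepSlope_measurable hf a _)).aestronglyMeasurable
  · exact Eventually.of_forall fun n => Eventually.of_forall fun y _ =>
      hM _ (stepSlope_mem hf a (hpos n) y)
  · exact intervalIntegrable_const
  · filter_upwards [hf.ae_differentiableAt_real] with y hy _
    refine (Hber_continuous.tendsto _).comp ?_
    refine straddle hy.hasDerivAt hpos h0 (fun n => ?_) (fun n => ?_)
    · have := Int.le_ceil ((y - a) / (L / ((n + 1 : ℕ) : ℝ)))
      rw [div_le_iff₀ (hpos n)] at this
      linarith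
    · have := (Int.ceil_lt_add_one ((y - a) / (L / ((n + 1 : ℕ) : ℝ)))).le
      rw [← sub_le_iff_le_add, le_div_iff₀ (hpos n)] at this
      linarith

lemma parab_zero (x : ℝ) : parab 0 x = -|x| := by simp [parab]

lemma parab_cont {t : ℝ} (ht : 0 ≤ t) : Continuous (parab t) := by
  rcases ht.eq_or_lt with rfl | ht
  · have : parab 0 = fun x => -|x| := funext parab_zero
    rw [this]; fun_prop
  · have : parab t = fun x => if |x| ≤ t then -t / 2 - x ^ 2 / (2 * t) else -|x| := by
      funext x; simp [parab, ht]
    rw [this]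
    refine Continuous.if_le (by fun_prop) (by fun_prop) (by fun_prop) (by fun_prop) ?_
    intro x hx
    rw [← sq_abs, hx]; field_simp; ring

lemma parab_hasDeriv {t z : ℝ} (ht : 0 < t) (hz : |z| < t) : HasDerivAt (parab t) (-z / t) z := by
  have h1 : HasDerivAt (fun x : ℝ => -t / 2 - x ^ 2 / (2 * t)) (-z / t) z := by
    have := ((hasDerivAt_pow 2 z).div_const (2 * t)).const_sub (-t / 2)
    have e : -(((2 : ℕ) : ℝ) * z ^ (2 - 1) / (2 * t)) = -z / t := by
      have := ht.ne'
      norm_num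
      field_simp
    rw [e] at this
    exact this
  refine h1.congr_of_eventuallyEq ?_
  have : ∀ᶠ x : ℝ in 𝓝 z, |x| < t := continuous_abs.continuousAt.eventually (gt_mem_nhds hz)
  filter_upwards [this] with x hx
  simp [parab, ht, hx.le]

/-- Entropy constant of the parabola. -/
noncomputable def Cpar (t : ℝ) : ℝ := ∫ z in (-t)..t, Hber (-z / t)

lemma excess_eq {t : ℝ} (ht : 0 < t) (xh ah : ℝ) {f : ℝ → ℝ} (hf : LipschitzWith 1 f)
    (hb : ∀ y, parabXA xh ah t y ≤ f y ∧ f y ≤ parabXA xh ah 0 y) :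
    excessEntropy xh ah t f
      = (∫ y in (xh - t)..(xh - t + 2 * t), Hber (deriv f y)) - Cpar t := by
  have e : xh - t + 2 * t = xh + t := by ring
  rw [e]
  have hle : xh - t ≤ xh + t := by linarith
  have h1 : excessEntropy xh ah t f = ∫ y in (xh - t)..(xh + t),
      (Hber (deriv f y) - Hber (deriv (parabXA xh ah t) y)) := by
    rw [intervalIntegral.integral_of_le hle, ← integral_Icc_eq_integral_Ioc]
    unfold excessEntropy
    refine (setIntegral_eq_integral_of_forall_compl_eq_zero fun y hy => ?_).symm
    have hy' : t < |y - xh| := by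
      by_contra hcon
      rw [not_lt, abs_le] at hcon
      exact hy ⟨by linarith [hcon.1], by linarith [hcon.2]⟩
    have hev : ∀ᶠ x in 𝓝 y, t < |x - xh| :=
      ((continuous_id.sub continuous_const).abs).continuousAt.eventually (lt_mem_nhds hy')
    have : f =ᶠ[𝓝 y] parabXA xh ah t := by
      filter_upwards [hev] with x hx
      have := hb x
      have e1 : parabXA xh ah t x = parabXA xh ah 0 x := by
        simp [parabXA, parab, not_le.2 hx]
      exact le_antisymm (by rw [e1]; exact this.2) this.1
    rw [this.deriv_eq, sub_self]
  have h2 : (∫ y in (xh - t)..(xh + t),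
      (Hber (deriv f y) - Hber (deriv (parabXA xh ah t) y))) = ∫ y in (xh - t)..(xh + t),
      (Hber (deriv f y) - Hber (-(y - xh) / t)) := by
    refine intervalIntegral.integral_congr_ae ?_
    have hne : ∀ᵐ y : ℝ, y ≠ xh + t := by
      simp [ae_iff]
    filter_upwards [hne] with y hy1 hy
    rw [Set.uIoc_of_le hle] at hy
    have hlt : y < xh + t := lt_of_le_of_ne hy.2 hy1
    have hz : |y - xh| < t := abs_lt.2 ⟨by linarith [hy.1], by linarith⟩
    have hd : HasDerivAt (parabXA xh ah t) (-(y - xh) / t) y := by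
      have := ((parab_hasDeriv ht hz).comp y ((hasDerivAt_id y).sub_const xh)).add_const ah
      rw [mul_one] at this
      exact this
    rw [hd.deriv]
  rw [h1, h2, intervalIntegral.integral_sub (intble_of_bdd (measurable_deriv f) (deriv_mem hf) _ _)]
  · congr 1
    have := intervalIntegral.integral_comp_sub_right (a := xh - t) (b := xh + t)
      (fun z => Hber (-z / t)) xh
    rw [this]
    unfold Cpar
    congr 1 <;> ring
  · exact (Hber_continuous.comp (by fun_prop)).intervalIntegrable _ _

lemma tendsto_eval {ι : Type*} {l : Filter ι} {F : ι → ℝ → ℝ} {f : ℝ → ℝ}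
    (hL : ∀ᶠ q in l, LipschitzWith 1 (F q)) (hF : ∀ y, Tendsto (fun q => F q y) l (𝓝 (f y)))
    {x : ι → ℝ} {x0 : ℝ} (hx : Tendsto x l (𝓝 x0)) :
    Tendsto (fun q => F q (x q)) l (𝓝 (f x0)) := by
  have h1 : Tendsto (fun q => F q (x q) - F q x0) l (𝓝 0) := by
    have h0 : Tendsto (fun q => |x q - x0|) l (𝓝 0) := by
      have := (hx.sub_const x0).abs
      simpa using this
    refine squeeze_zero_norm' ?_ h0
    filter_upwards [hL] with q hq
    have := hq.dist_le_mul (x q) x0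
    simpa [Real.dist_eq] using this
  have := h1.add (hF x0)
  simpa using this

theorem raterw_lowerSemicontinuous
    (t : ℝ) (ht : 0 < t) (mh m : ℕ) (hmh : 1 ≤ mh) (hm : 1 ≤ m) :
    LowerSemicontinuous
      (fun q : (Fin mh → ℝ × ℝ) × (Fin m → ℝ × ℝ) => raterw t mh m q.1 q.2) := by
  intro q0 c hc
  by_contra hcon
  obtain ⟨c', hcc', hc'⟩ := exists_between hc
  simp only at hc'
  have hfreq : ∃ᶠ q in 𝓝 q0, raterw t mh m q.1 q.2 < c' := by
    rw [Filter.not_eventually] at hcon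
    exact hcon.mono fun q hq => lt_of_le_of_lt (not_lt.1 hq) hcc'
  have hc'top : c' ≠ ⊤ := ne_top_of_lt hc'
  have hne : (𝓝 q0 ⊓ 𝓟 {q : (Fin mh → ℝ × ℝ) × (Fin m → ℝ × ℝ) |
      raterw t mh m q.1 q.2 < c'}).NeBot := frequently_mem_iff_neBot.1 hfreq
  obtain ⟨U, hU⟩ := Ultrafilter.exists_le
    (𝓝 q0 ⊓ 𝓟 {q : (Fin mh → ℝ × ℝ) × (Fin m → ℝ × ℝ) | raterw t mh m q.1 q.2 < c'})
  have hUq : (U : Filter ((Fin mh → ℝ × ℝ) × (Fin m → ℝ × ℝ))) ≤ 𝓝 q0 := hU.trans inf_le_left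
  have hUS : ∀ᶠ q in (U : Filter ((Fin mh → ℝ × ℝ) × (Fin m → ℝ × ℝ))), raterw t mh m q.1 q.2 < c' :=
    (hU.trans inf_le_right) (mem_principal_self _)
  have hex : ∀ q : (Fin mh → ℝ × ℝ) × (Fin m → ℝ × ℝ), ∃ f : Fin mh → ℝ → ℝ,
      raterw t mh m q.1 q.2 < c' →
      ((∀ k, LipschitzWith 1 (f k) ∧
          ∀ y, parabXA (q.1 k).1 (q.1 k).2 t y ≤ f k y ∧ f k y ≤ parabXA (q.1 k).1 (q.1 k).2 0 y) ∧
        ∀ j, (⨆ k, f k (q.2 j).1) = (q.2 j).2) ∧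
      ENNReal.ofReal (∑ k, excessEntropy (q.1 k).1 (q.1 k).2 t (f k)) < c' := by
    intro q
    by_cases hq : raterw t mh m q.1 q.2 < c'
    · have hq' := hq
      unfold raterw at hq'
      simp only [iInf_lt_iff] at hq'
      obtain ⟨f, hf, hlt⟩ := hq'
      exact ⟨f, fun _ => ⟨hf, hlt⟩⟩
    · exact ⟨fun _ _ => 0, fun h => absurd h hq⟩
  choose F hF using hex
  have hFU : ∀ᶠ q in (U : Filter ((Fin mh → ℝ × ℝ) × (Fin m → ℝ × ℝ))), _ := hUS.mono hF
  -- convergence of parameters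
  have hx : ∀ k, Tendsto (fun q : (Fin mh → ℝ × ℝ) × (Fin m → ℝ × ℝ) => (q.1 k).1) U
      (𝓝 (q0.1 k).1) := fun k =>
    Tendsto.mono_left (Continuous.tendsto (by fun_prop) q0) hUq
  have hP : ∀ s, 0 ≤ s → ∀ k y,
      Tendsto (fun q : (Fin mh → ℝ × ℝ) × (Fin m → ℝ × ℝ) => parabXA (q.1 k).1 (q.1 k).2 s y) U
      (𝓝 (parabXA (q0.1 k).1 (q0.1 k).2 s y)) := by
    intro s hs k y
    refine Tendsto.mono_left (Continuous.tendsto ?_ q0) hUq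
    unfold parabXA
    have h1 := (parab_cont hs).comp
      (f := fun q : (Fin mh → ℝ × ℝ) × (Fin m → ℝ × ℝ) => y - (q.1 k).1) (by fun_prop)
    exact h1.add (by fun_prop)
  -- limits
  have hlim : ∀ k y, ∃ z, Tendsto (fun q => F q k y) U (𝓝 z) := by
    intro k y
    set l := parabXA (q0.1 k).1 (q0.1 k).2 t y - 1
    set u := parabXA (q0.1 k).1 (q0.1 k).2 0 y + 1
    have h1 : ∀ᶠ q in (U : Filter ((Fin mh → ℝ × ℝ) × (Fin m → ℝ × ℝ))), F q k y ∈ Set.Icc l u := by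
      filter_upwards [hFU, (hP t ht.le k y).eventually (lt_mem_nhds (sub_one_lt _)),
        (hP 0 le_rfl k y).eventually (gt_mem_nhds (lt_add_one _))] with q hq h2 h3
      have := (hq.1.1 k).2 y
      exact ⟨h2.le.trans this.1, this.2.trans h3.le⟩
    obtain ⟨z, -, hz⟩ := (isCompact_Icc (a := l) (b := u)).ultrafilter_le_nhds
      (U.map fun q => F q k y) (by
        rw [Filter.le_principal_iff]; exact h1)
    exact ⟨z, hz⟩
  choose f0 hf0 using hlim
  have hLip : ∀ k, LipschitzWith 1 (f0 k) := by
    intro k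
    refine LipschitzWith.of_dist_le_mul fun y z => ?_
    refine le_of_tendsto ((hf0 k y).dist (hf0 k z)) ?_
    filter_upwards [hFU] with q hq
    exact (hq.1.1 k).1.dist_le_mul y z
  have hbd : ∀ k y, parabXA (q0.1 k).1 (q0.1 k).2 t y ≤ f0 k y ∧
      f0 k y ≤ parabXA (q0.1 k).1 (q0.1 k).2 0 y := by
    intro k y
    constructor
    · refine le_of_tendsto_of_tendsto (hP t ht.le k y) (hf0 k y) ?_
      filter_upwards [hFU] with q hq
      exact ((hq.1.1 k).2 y).1
    · refine le_of_tendsto_of_tendsto (hf0 k y) (hP 0 le_rfl k y) ?_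
      filter_upwards [hFU] with q hq
      exact ((hq.1.1 k).2 y).2
  have hFL : ∀ k, ∀ᶠ q in (U : Filter ((Fin mh → ℝ × ℝ) × (Fin m → ℝ × ℝ))), LipschitzWith 1 (F q k) := fun k =>
    hFU.mono fun q hq => (hq.1.1 k).1
  have : Nonempty (Fin mh) := ⟨⟨0, hmh⟩⟩
  have hsup : ∀ j, (⨆ k, f0 k (q0.2 j).1) = (q0.2 j).2 := by
    intro j
    have hxj : Tendsto (fun q : (Fin mh → ℝ × ℝ) × (Fin m → ℝ × ℝ) => (q.2 j).1) U
      (𝓝 (q0.2 j).1) := Tendsto.mono_left (Continuous.tendsto (by fun_prop) q0) hUq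
    have haj : Tendsto (fun q : (Fin mh → ℝ × ℝ) × (Fin m → ℝ × ℝ) => (q.2 j).2) U
      (𝓝 (q0.2 j).2) := Tendsto.mono_left (Continuous.tendsto (by fun_prop) q0) hUq
    have h1 : Tendsto (fun q => ⨆ k, F q k (q.2 j).1) U (𝓝 (⨆ k, f0 k (q0.2 j).1)) := by
      simp only [← Finset.sup'_univ_eq_ciSup]
      exact Filter.Tendsto.finset_sup'_nhds_apply Finset.univ_nonempty
        fun k _ => tendsto_eval (hFL k) (hf0 k) hxj
    refine tendsto_nhds_unique h1 (haj.congr' ?_)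
    filter_upwards [hFU] with q hq
    exact (hq.1.2 j).symm
  -- the entropy inequality
  have hsumN : ∀ n : ℕ, ∑ k, (slopeSum (f0 k) ((q0.1 k).1 - t) (2 * t / (n + 1 : ℕ)) (n + 1) - Cpar t)
      ≤ c'.toReal := by
    intro n
    have hpos : 0 < 2 * t / ((n + 1 : ℕ) : ℝ) := by positivity
    have hT : Tendsto (fun q : (Fin mh → ℝ × ℝ) × (Fin m → ℝ × ℝ) =>
        ∑ k, (slopeSum (F q k) ((q.1 k).1 - t) (2 * t / (n + 1 : ℕ)) (n + 1) - Cpar t)) U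
        (𝓝 (∑ k, (slopeSum (f0 k) ((q0.1 k).1 - t) (2 * t / (n + 1 : ℕ)) (n + 1) - Cpar t))) := by
      refine tendsto_finsetSum _ fun k _ => Tendsto.sub_const ?_ _
      unfold slopeSum
      refine tendsto_finsetSum _ fun i _ => Tendsto.const_mul _ ?_
      refine (Hber_continuous.tendsto _).comp (Tendsto.div_const (Tendsto.sub ?_ ?_) _)
      · exact tendsto_eval (hFL k) (hf0 k) ((((hx k).sub_const t).add_const _).add_const _)
      · exact tendsto_eval (hFL k) (hf0 k) (((hx k).sub_const t).add_const _)
    refine le_of_tendsto hT ?_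
    filter_upwards [hFU] with q hq
    have h1 := (ENNReal.ofReal_le_iff_le_toReal hc'top).1 hq.2.le
    refine le_trans (Finset.sum_le_sum fun k _ => ?_) h1
    rw [excess_eq ht _ _ (hq.1.1 k).1 (hq.1.1 k).2]
    have h2 := slopeSum_le (hq.1.1 k).1 ((q.1 k).1 - t) hpos (n + 1)
    have e : ((n + 1 : ℕ) : ℝ) * (2 * t / ((n + 1 : ℕ) : ℝ)) = 2 * t := by
      have : ((n + 1 : ℕ) : ℝ) ≠ 0 := by positivity
      field_simp
    rw [e] at h2
    linarith
  have hfin : ∑ k, excessEntropy (q0.1 k).1 (q0.1 k).2 t (f0 k) ≤ c'.toReal := by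
    refine le_of_tendsto' (x := atTop) (tendsto_finsetSum _ fun k _ => ?_) hsumN
    rw [excess_eq ht _ _ (hLip k) (hbd k)]
    exact (slopeSum_tendsto (hLip k) _ (by positivity)).sub_const _
  have hR : raterw t mh m q0.1 q0.2 ≤ c' := by
    unfold raterw
    refine (iInf₂_le f0 ⟨fun k => ⟨hLip k, hbd k⟩, hsup⟩).trans ?_
    exact (ENNReal.ofReal_le_iff_le_toReal hc'top).2 hfin
  exact absurd hc' (not_lt.2 hR)
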